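/- Let f : ℝⁿ → ℝ be differentiable with β-Lipschitz gradient (β-smooth). Suppose x, y ∈ ℝⁿ differ only in a single coordinate z (that is, x_i = y_i for all i ≠ z), so that ‖y − x‖ = |y_z − x_z|. Then |f(y) − f(x)| ≤ β|y_z − x_z|² + |∂f/∂x_z (x)| · |y_z − x_z|; that is, the change in the classifier's output between the individual x and its counterfactual y (differing only in the protected attribute z) is bounded by β times the squared change in the protected attribute plus the prediction sensitivity at x times the change in the protected attribute. -/

import Mathlib

/-!
On the segment from `x` to `y` the derivative of `f` stays within `β * ‖y - x‖` of its value at `x`,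
so the mean value inequality applied to `f - f' x` bounds the first-order Taylor remainder by
`β * ‖y - x‖ ^ 2`. For counterfactual neighbors `y - x` is a multiple of the `z`-th basis vector, so
the linear term only sees the `z`-th partial derivative.
-/

section FirstOrderTaylor

variable {𝕜 E : Type*} [RCLike 𝕜] [NormedAddCommGroup E] [NormedSpace ℝ E] {β : ℝ} {x y : E}

theorem norm_sub_sub_le_mul_sq_of_hasFDerivWithinAt_segment
    {F : Type*} [NormedSpace 𝕜 E] [NormedAddCommGroup F] [NormedSpace 𝕜 F]
    {f : E → F} {f' : E → E →L[𝕜] F}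
    (hf : ∀ w ∈ segment ℝ x y, HasFDerivWithinAt f (f' w) (segment ℝ x y) w)
    (hlip : ∀ w ∈ segment ℝ x y, ‖f' w - f' x‖ ≤ β * ‖w - x‖) :
    ‖f y - f x - f' x (y - x)‖ ≤ β * ‖y - x‖ ^ 2 := by
  have hx : x ∈ segment ℝ x y := left_mem_segment ℝ x y
  have hy : y ∈ segment ℝ x y := right_mem_segment ℝ x y
  rcases eq_or_ne y x with rfl | hne
  · simp
  have hβ : 0 ≤ β :=
    nonneg_of_mul_nonneg_left ((norm_nonneg _).trans (hlip y hy)) (norm_sub_pos_iff.2 hne)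
  have hbound : ∀ w ∈ segment ℝ x y, ‖f' w - f' x‖ ≤ β * ‖y - x‖ := fun w hw ↦
    (hlip w hw).trans (mul_le_mul_of_nonneg_left (norm_sub_le_of_mem_segment hw) hβ)
  calc ‖f y - f x - f' x (y - x)‖
      ≤ β * ‖y - x‖ * ‖y - x‖ :=
        (convex_segment x y).norm_image_sub_le_of_norm_hasFDerivWithin_le' hf hbound hx hy
    _ = β * ‖y - x‖ ^ 2 := by ring

theorem norm_sub_sub_inner_le_mul_sq_of_hasGradientWithinAt_segment
    [InnerProductSpace 𝕜 E] [CompleteSpace E] {f : E → 𝕜} {f' : E → E}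
    (hf : ∀ w ∈ segment ℝ x y, HasGradientWithinAt f (f' w) (segment ℝ x y) w)
    (hlip : ∀ w ∈ segment ℝ x y, ‖f' w - f' x‖ ≤ β * ‖w - x‖) :
    ‖f y - f x - inner 𝕜 (f' x) (y - x)‖ ≤ β * ‖y - x‖ ^ 2 := by
  have hlip_dual : ∀ w ∈ segment ℝ x y,
      ‖InnerProductSpace.toDual 𝕜 E (f' w) - InnerProductSpace.toDual 𝕜 E (f' x)‖
        ≤ β * ‖w - x‖ := fun w hw ↦ by
    rw [← map_sub, LinearIsometryEquiv.norm_map]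
    exact hlip w hw
  exact norm_sub_sub_le_mul_sq_of_hasFDerivWithinAt_segment
    (fun w hw ↦ (hf w hw).hasFDerivWithinAt) hlip_dual

end FirstOrderTaylor

theorem sub_eq_piLp_single_of_forall_ne_eq {ι : Type*} [DecidableEq ι] {p : ENNReal}
    {E : ι → Type*} [∀ i, AddCommGroup (E i)] {x y : PiLp p E} {z : ι}
    (h : ∀ i, i ≠ z → x i = y i) : y - x = PiLp.single p z (y z - x z) := by
  ext i
  rcases eq_or_ne i z with rfl | hi
  · rw [WithLp.ofLp_sub, Pi.sub_apply, PiLp.single_eq_same]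
  · rw [WithLp.ofLp_sub, Pi.sub_apply, PiLp.single_eq_of_ne p hi, h i hi, sub_self]

theorem counterfactual_output_bound_general
    {ι 𝕜 : Type*} [Fintype ι] [RCLike 𝕜] {β : ℝ}
    {f : EuclideanSpace 𝕜 ι → 𝕜} {f' : EuclideanSpace 𝕜 ι → EuclideanSpace 𝕜 ι}
    {z : ι} {x y : EuclideanSpace 𝕜 ι}
    (hf : ∀ w ∈ segment ℝ x y, HasGradientWithinAt f (f' w) (segment ℝ x y) w)
    (hlip : ∀ w ∈ segment ℝ x y, ‖f' w - f' x‖ ≤ β * ‖w - x‖)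
    (hneighbor : ∀ i, i ≠ z → x i = y i) :
    ‖f y - f x‖ ≤ β * ‖y z - x z‖ ^ 2 + ‖f' x z‖ * ‖y z - x z‖ := by
  classical
  have hsingle : y - x = EuclideanSpace.single z (y z - x z) :=
    sub_eq_piLp_single_of_forall_ne_eq hneighbor
  have hnorm : ‖y - x‖ = ‖y z - x z‖ := by
    rw [hsingle, PiLp.norm_single]
  have hinner : ‖inner 𝕜 (f' x) (y - x)‖ = ‖f' x z‖ * ‖y z - x z‖ := by
    rw [hsingle, EuclideanSpace.inner_single_right, norm_mul, RCLike.norm_conj, mul_comm]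
  calc ‖f y - f x‖
      ≤ ‖f y - f x - inner 𝕜 (f' x) (y - x)‖ + ‖inner 𝕜 (f' x) (y - x)‖ :=
        norm_le_norm_sub_add _ _
    _ ≤ β * ‖y - x‖ ^ 2 + ‖inner 𝕜 (f' x) (y - x)‖ := by
        gcongr
        exact norm_sub_sub_inner_le_mul_sq_of_hasGradientWithinAt_segment hf hlip
    _ = β * ‖y z - x z‖ ^ 2 + ‖f' x z‖ * ‖y z - x z‖ := by rw [hnorm, hinner]

/-- **Counterfactual output bound via prediction sensitivity.**
If `f : ℝⁿ → ℝ` is differentiable with a `β`-Lipschitz gradient (`β`-smooth),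
and `x, y` are counterfactual neighbors in coordinate `z` (they agree in every
coordinate except possibly `z`), then the change in the classifier's output is
bounded by `β` times the squared change in the protected attribute plus the
prediction sensitivity at `x` (the absolute partial derivative in coordinate
`z` at `x`) times the change in the protected attribute. -/
theorem counterfactual_output_bound
    {n : ℕ} {β : ℝ} (f : EuclideanSpace ℝ (Fin n) → ℝ)
    (hdiff : Differentiable ℝ f)
    (hsmooth : ∀ x y : EuclideanSpace ℝ (Fin n),
      ‖gradient f y - gradient f x‖ ≤ β * ‖y - x‖)
    (z : Fin n) (x y : EuclideanSpace ℝ (Fin n))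
    (hneighbor : ∀ i : Fin n, i ≠ z → x i = y i) :
    |f y - f x| ≤ β * |y z - x z| ^ 2 + |gradient f x z| * |y z - x z| := by
  exact counterfactual_output_bound_general
    (fun w _ ↦ (hdiff w).hasGradientAt.hasFDerivAt.hasFDerivWithinAt)
    (fun w _ ↦ hsmooth x w) hneighbor
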